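/- Let V be a type of vertices with a label function L : V → Fin (k+1), and let F be a set of triangular faces all of which are rk-faces. Let f^w = {v₁, v₂, v_w} ∈ F and f^e = {v₁, v₂, v_e} ∈ F be the two faces sharing the edge e = {v₁, v₂}, let j be the label of e (j = L(v₁) if L(v₁) ≠ 0, otherwise j = L(v₂)), and let v_n ∉ {v₁, v₂, v_w, v_e} be a new vertex with L(v_n) = j. Then every face of the set F' = (F \ {f^w, f^e}) ∪ {{v_n, v₁, v_w}, {v_n, v₂, v_w}, {v_n, v₁, v_e}, {v_n, v₂, v_e}} obtained by one edge-split step is an rk-face; i.e., an edge split using the labeling rule L(v_n) = L(e) on an rk-mesh produces an rk-mesh. -/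

import Mathlib

/-- A face (finite set of vertices) is regular k-labeled (an rk-face) w.r.t. a label
function `L : V → Fin (k+1)` if some vertex has nonzero label, and any two vertices
with nonzero labels have equal labels. -/
def rkFace {V : Type*} {k : ℕ} (L : V → Fin (k + 1)) (f : Finset V) : Prop :=
  (∃ v ∈ f, L v ≠ 0) ∧ ∀ v₁ ∈ f, ∀ v₂ ∈ f, L v₁ ≠ 0 → L v₂ ≠ 0 → L v₁ = L v₂

/-!
An edge split introduces no label foreign to the old face, since `L(vₙ) = L(e)` is the label of
an endpoint of `e`. Each new face also keeps a nonzero label: either `L(e) ≠ 0` and `vₙ` carries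
it, or both endpoints of `e` have label `0`, so the nonzero label of the old face sits on a vertex
opposite to `e`, which survives in the new face.
-/

section EdgeSplit

variable {V : Type*} {k : ℕ} {L : V → Fin (k + 1)}

theorem rkFace.of_forall_exists_label_eq {f g : Finset V} (hf : rkFace L f)
    (hg : ∃ v ∈ g, L v ≠ 0) (hgf : ∀ v ∈ g, ∃ w ∈ f, L v = L w) : rkFace L g := by
  refine ⟨hg, fun u hu v hv hu_ne hv_ne => ?_⟩
  obtain ⟨u', hu', hu_eq⟩ := hgf u hu
  obtain ⟨v', hv', hv_eq⟩ := hgf v hv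
  rw [hu_eq] at hu_ne ⊢
  rw [hv_eq] at hv_ne ⊢
  exact hf.2 u' hu' v' hv' hu_ne hv_ne

/-- The label `L(e)` of the edge `e = {v₁, v₂}`. The case distinction favours `v₁`, but in an
rk-face two nonzero labels agree, so there the order of the endpoints does not matter. -/
def edgeLabel (L : V → Fin (k + 1)) (v₁ v₂ : V) : Fin (k + 1) :=
  if L v₁ ≠ 0 then L v₁ else L v₂

theorem edgeLabel_eq_or_eq (L : V → Fin (k + 1)) (v₁ v₂ : V) :
    edgeLabel L v₁ v₂ = L v₁ ∨ edgeLabel L v₁ v₂ = L v₂ :=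
  ite_eq_or_eq _ _ _

theorem edgeLabel_eq_zero_iff {v₁ v₂ : V} : edgeLabel L v₁ v₂ = 0 ↔ L v₁ = 0 ∧ L v₂ = 0 := by
  unfold edgeLabel
  split_ifs <;> simp_all

variable [DecidableEq V] {s : Finset V} {v₁ v₂ vn : V}

theorem exists_label_ne_zero_insert_of_edgeLabel
    (h : ∃ w ∈ insert v₁ (insert v₂ s), L w ≠ 0) (hn : L vn = edgeLabel L v₁ v₂) :
    ∃ w ∈ insert vn s, L w ≠ 0 := by
  by_cases hn_zero : L vn = 0
  · obtain ⟨h₁, h₂⟩ := edgeLabel_eq_zero_iff.mp (hn ▸ hn_zero)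
    simpa [h₁, h₂, hn_zero] using h
  · exact ⟨vn, Finset.mem_insert_self vn s, hn_zero⟩

theorem rkFace.edgeSplit (hf : rkFace L (insert v₁ (insert v₂ s)))
    (hn : L vn = edgeLabel L v₁ v₂) {v : V} (hv : v = v₁ ∨ v = v₂) :
    rkFace L (insert vn (insert v s)) := by
  apply hf.of_forall_exists_label_eq
  · obtain ⟨w, hw, hw_ne⟩ := exists_label_ne_zero_insert_of_edgeLabel hf.1 hn
    exact ⟨w, Finset.insert_subset_insert vn (Finset.subset_insert v s) hw, hw_ne⟩
  · intro u hu
    obtain rfl | hu := Finset.mem_insert.mp hu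
    · rcases edgeLabel_eq_or_eq L v₁ v₂ with h | h
      · exact ⟨v₁, by simp, hn.trans h⟩
      · exact ⟨v₂, by simp, hn.trans h⟩
    · have hsub : insert v s ⊆ insert v₁ (insert v₂ s) := by
        rcases hv with rfl | rfl
        · exact Finset.insert_subset_insert v (Finset.subset_insert v₂ s)
        · exact Finset.subset_insert v₁ (insert v s)
      exact ⟨u, hsub hu, rfl⟩

end EdgeSplit

/-- An edge split, using the labeling rule `L(v_n) = L(e)`, on an rk-mesh produces
an rk-mesh: with `j` the label of the split edge `{v₁, v₂}` (namely `L v₁` if it is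
nonzero, else `L v₂`), every face of the resulting set of faces is an rk-face. -/
theorem edgeSplit_rkMesh {V : Type*} [DecidableEq V] {k : ℕ}
    (L : V → Fin (k + 1)) (F : Set (Finset V)) (hF : ∀ f ∈ F, rkFace L f)
    (v₁ v₂ vw ve vn : V) (j : Fin (k + 1))
    (hwF : ({v₁, v₂, vw} : Finset V) ∈ F)
    (heF : ({v₁, v₂, ve} : Finset V) ∈ F)
    (hj : j = if L v₁ ≠ 0 then L v₁ else L v₂)
    (hdist : vn ≠ v₁ ∧ vn ≠ v₂ ∧ vn ≠ vw ∧ vn ≠ ve) (hLn : L vn = j) :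
    ∀ g ∈ (F \ {({v₁, v₂, vw} : Finset V), ({v₁, v₂, ve} : Finset V)}) ∪
        {({vn, v₁, vw} : Finset V), ({vn, v₂, vw} : Finset V),
          ({vn, v₁, ve} : Finset V), ({vn, v₂, ve} : Finset V)},
      rkFace L g := by
  have hn : L vn = edgeLabel L v₁ v₂ := hLn.trans hj
  rintro g (⟨hgF, -⟩ | rfl | rfl | rfl | rfl)
  · exact hF g hgF
  · exact (hF _ hwF).edgeSplit hn (.inl rfl)
  · exact (hF _ hwF).edgeSplit hn (.inr rfl)
  · exact (hF _ heF).edgeSplit hn (.inl rfl)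
  · exact (hF _ heF).edgeSplit hn (.inr rfl)
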